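/- Let T ∈ 𝓔^ω be orientation-preserving with T(π(0)) = π(0). Having no supercritical value is an open property in 𝓒^1: if f_n → f_0 in the C^1 topology and each f_n has a supercritical value, then f_0 has a supercritical value. -/

import Mathlib

/-!
Supercriticality is intrinsic to the circle: `x` is supercritical when it has two backward orbits
`(y_k)`, `(z_k)` in `K(f,T)` with `y_1 ≠ z_1` and equal series `∑ f'(y_k) / (T^k)'(y_k)`. Indeed
`deriv_hSum` identifies the derivative of `h^f_i` with such a series (`derivSeries`), and every
backward orbit is coded by a word from any lift of its base point (`exists_coding`).

Since `f_n → f_0` in `C^1`, the derivatives `f_n'` are eventually bounded by one constant, and all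
limits are taken along a fixed non-principal ultrafilter, so that bounded quantities converge
without extracting subsequences. Three facts pass to the limit.

* Points of `K(f_n,T)` converge to points of `K(f_0,T)` (`mem_Kset_of_tendsto`). Calibrated
  sub-actions are Lipschitz with a constant depending only on `T` and on the bound for `f_n'`
  (`gset_lipschitz`), hence after subtracting constants they converge to a calibrated sub-action
  of `f_0`; here `β` is 1-Lipschitz for the uniform norm (`beta_le_add`).
* The two first preimages stay distinct, because `T` is locally injective.
* The series converge by dominated convergence, the dominating series being geometric because `T`
  is expanding, so the two limiting series agree.
-/

open MeasureTheory Topology Filter Set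
open scoped UniformConvergence

noncomputable section

/-- The circle `ℝ/ℤ`. -/
abbrev Circle1 : Type := AddCircle (1 : ℝ)

/-- The canonical representative in `[0,1)` of a point of `ℝ/ℤ`. -/
noncomputable def rep (z : Circle1) : ℝ := (AddCircle.equivIco 1 0 z : ℝ)

/-- The circle map induced by a lift `F : ℝ → ℝ`. -/
noncomputable def cmap (F : ℝ → ℝ) : Circle1 → Circle1 := fun z => ((F (rep z) : ℝ) : Circle1)

/-- The data determining the `C^r` topology: all derivatives of order `≤ r`, viewed in the
space of functions `ℝ → ℝ` with the uniform-convergence topology. -/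
noncomputable def crSeq (r : ℕ∞) (f : ℝ → ℝ) : ℕ → (ℝ →ᵤ ℝ) :=
  fun k => UniformFun.ofFun (if (k : ℕ∞) ≤ r then iteratedDeriv k f else 0)

/-- The space `𝓒^r` of `C^r` functions `ℝ/ℤ → ℝ`. -/
def CrFun (r : ℕ∞) : Type := {f : Circle1 → ℝ // ContDiff ℝ r fun x : ℝ => f ↑x}

/-- The `C^r` topology on `𝓒^r`. -/
noncomputable instance (r : ℕ∞) : TopologicalSpace (CrFun r) :=
  TopologicalSpace.induced (fun f : CrFun r => crSeq r fun x : ℝ => f.1 ↑x) inferInstance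

/-- `F : ℝ → ℝ` is a lift of a `C^r` expanding circle map: it is `C^r`, sends `x+1` to
`F x + d` for a fixed integer `d`, and `|(Fⁿ)'| ≥ C λⁿ` for some `C > 0`, `λ > 1`. -/
def ExpandingLift (r : ℕ∞) (F : ℝ → ℝ) : Prop :=
  ContDiff ℝ r F ∧ (∃ d : ℤ, ∀ x : ℝ, F (x + 1) = F x + d) ∧
    ∃ C > (0 : ℝ), ∃ l > (1 : ℝ), ∀ n : ℕ, 1 ≤ n → ∀ x : ℝ, C * l ^ n ≤ |deriv (F^[n]) x|

/-- The space `𝓔^r` of (lifts of) `C^r` expanding circle maps, with the `C^r` topology. -/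
def ExpMap (r : ℕ∞) : Type := {F : ℝ → ℝ // ExpandingLift r F}

noncomputable instance (r : ℕ∞) : TopologicalSpace (ExpMap r) :=
  TopologicalSpace.induced (fun F : ExpMap r => crSeq r F.1) inferInstance

/-- `μ` is a `T`-invariant Borel probability measure. -/
def InvProb (T : Circle1 → Circle1) (μ : Measure Circle1) : Prop :=
  IsProbabilityMeasure μ ∧ μ.map T = μ

/-- `β(f,T)`, the maximal ergodic average. -/
noncomputable def beta (f : Circle1 → ℝ) (T : Circle1 → Circle1) : ℝ :=
  sSup ((fun μ : Measure Circle1 => ∫ x, f x ∂μ) '' {μ | InvProb T μ})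

/-- `μ` is a maximizing measure for `(f,T)`. -/
def IsMaximizing (f : Circle1 → ℝ) (T : Circle1 → Circle1) (μ : Measure Circle1) : Prop :=
  InvProb T μ ∧ ∫ x, f x ∂μ = beta f T

/-- `μ` is a periodic measure: an invariant measure supported on a periodic orbit. -/
def IsPeriodicMeasure (T : Circle1 → Circle1) (μ : Measure Circle1) : Prop :=
  InvProb T μ ∧ ∃ x : Circle1, ∃ n : ℕ, 0 < n ∧ T^[n] x = x ∧
    μ (Set.range fun k : ℕ => T^[k] x) = 1

/-- `(f,T)` is uniquely maximized by a periodic measure. -/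
def UniqMaxPeriodic (f : Circle1 → ℝ) (T : Circle1 → Circle1) : Prop :=
  ∃ μ : Measure Circle1, IsMaximizing f T μ ∧ IsPeriodicMeasure T μ ∧
    ∀ ν : Measure Circle1, IsMaximizing f T ν → ν = μ

/-- A (continuous) sub-action for `(f,T)`. -/
def IsSubaction (f : Circle1 → ℝ) (T : Circle1 → Circle1) (g : Circle1 → ℝ) : Prop :=
  Continuous g ∧ ∀ x, g x + f x ≤ g (T x) + beta f T

/-- A calibrated sub-action for `(f,T)`. -/
def IsCalibrated (f : Circle1 → ℝ) (T : Circle1 → Circle1) (g : Circle1 → ℝ) : Prop :=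
  IsSubaction f T g ∧ ∀ x, ∃ y, T y = x ∧ g y + f y = g x + beta f T

/-- `G_{f,T}`: the set of Lipschitz calibrated sub-actions of `(f,T)`. -/
def Gset (f : Circle1 → ℝ) (T : Circle1 → Circle1) : Set (Circle1 → ℝ) :=
  {g | (∃ K : NNReal, LipschitzWith K g) ∧ IsCalibrated f T g}

/-- The set `E_{f,T,g}`. -/
def Eset (f : Circle1 → ℝ) (T : Circle1 → Circle1) (g : Circle1 → ℝ) : Set Circle1 :=
  {x | g x + f x = g (T x) + beta f T}

/-- The set `Λ*_{f,T,g}`. -/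
def LambdaStar (f : Circle1 → ℝ) (T : Circle1 → Circle1) (g : Circle1 → ℝ) : Set Circle1 :=
  {x | ∀ n : ℕ, T^[n] x ∈ Eset f T g}

/-- The set `Λ_{f,T,g}`. -/
def Lambda (f : Circle1 → ℝ) (T : Circle1 → Circle1) (g : Circle1 → ℝ) : Set Circle1 :=
  ⋂ n : ℕ, T^[n] '' LambdaStar f T g

/-- The set `K(f,T)`. -/
def Kset (f : Circle1 → ℝ) (T : Circle1 → Circle1) : Set Circle1 :=
  ⋃ g ∈ Gset f T, Lambda f T g

/-- The `(f,T)`-non-wandering set `Ω(f,T)`. -/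
def OmegaSet (f : Circle1 → ℝ) (T : Circle1 → Circle1) : Set Circle1 :=
  {x | ∀ ε > (0 : ℝ), ∃ n : ℕ, 1 ≤ n ∧ ∃ z : Circle1, T^[n] z = x ∧ dist z x < ε ∧
    |∑ i ∈ Finset.range n, (f (T^[i] z) - beta f T)| < ε}

/-- `A` is a periodic orbit of `T`. -/
def IsPeriodicOrbit (T : Circle1 → Circle1) (A : Set Circle1) : Prop :=
  ∃ x : Circle1, (∃ n : ℕ, 0 < n ∧ T^[n] x = x) ∧ A = Set.range fun k : ℕ => T^[k] x

/-- `A` is a `T`-minimal set: a nonempty compact invariant set with no proper nonempty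
compact invariant subset. -/
def IsMinimalSet (T : Circle1 → Circle1) (A : Set Circle1) : Prop :=
  A.Nonempty ∧ IsCompact A ∧ T '' A ⊆ A ∧
    ∀ B ⊆ A, B.Nonempty → IsCompact B → T '' B ⊆ B → B = A

/-- The space of `C^r` families of functions on the circle with `q` parameters,
i.e. maps `(t,x) ↦ f_t(x)` that are jointly `C^r` (the circle variable via a lift). -/
def FamFun (r : ℕ∞) (q : ℕ) : Type :=
  {G : ((Fin q → ℝ) × ℝ) → ℝ // ContDiff ℝ r G ∧ ∀ t x, G (t, x + 1) = G (t, x)}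

noncomputable def famSeq (r : ℕ∞) (q : ℕ) (G : ((Fin q → ℝ) × ℝ) → ℝ) :
    (k : ℕ) → (((Fin q → ℝ) × ℝ) →ᵤ (((Fin q → ℝ) × ℝ) [×k]→L[ℝ] ℝ)) :=
  fun k => UniformFun.ofFun (if (k : ℕ∞) ≤ r then iteratedFDeriv ℝ k G else 0)

/-- The `C^r` topology on the space of `C^r` families. -/
noncomputable instance (r : ℕ∞) (q : ℕ) : TopologicalSpace (FamFun r q) :=
  TopologicalSpace.induced (fun G : FamFun r q => famSeq r q G.1) inferInstance

/-- The member `f_t : ℝ/ℤ → ℝ` of a family, at the parameter `t`. -/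
noncomputable def famMem {r : ℕ∞} {q : ℕ} (G : FamFun r q) (t : Fin q → ℝ) : Circle1 → ℝ :=
  fun z => G.1 (t, rep z)

/-- The product `m_∞` over `ℕ` of Lebesgue measure on `[0,1]`, realised as the pushforward of
the Haar probability measure of the compact group `(ℝ/ℤ)^ℕ` under the coordinatewise choice of
representatives in `[0,1)`. -/
noncomputable def mInfty : Measure (ℕ → ℝ) :=
  Measure.map (fun (t : ℕ → Circle1) (n : ℕ) => rep (t n))
    (MeasureTheory.Measure.addHaarMeasure (⊤ : TopologicalSpace.PositiveCompacts (ℕ → Circle1)))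

/-- `S` is an `N`-dimensionally shy subset of a normed real vector space `V`. -/
def NDimShy {V : Type*} [NormedAddCommGroup V] [NormedSpace ℝ V] (N : ℕ) (S : Set V) : Prop :=
  ∃ φ : Fin N → V, ∀ f : V,
    volume {t : Fin N → ℝ | (∀ i, t i ∈ Set.Icc (0 : ℝ) 1) ∧ f + ∑ i, t i • φ i ∈ S} = 0

/-- `S` is a finite dimensionally shy subset of a normed real vector space `V`. -/
def FinDimShy {V : Type*} [NormedAddCommGroup V] [NormedSpace ℝ V] (S : Set V) : Prop :=
  ∃ N : ℕ, 0 < N ∧ NDimShy N S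

/-- `S` is a shy subset of `V`: there are a compactly supported Borel probability measure `μ`
on `V` and a Borel set `S̃ ⊇ S` all of whose translates are `μ`-null. -/
def IsShy {V : Type*} [NormedAddCommGroup V] [NormedSpace ℝ V] (S : Set V) : Prop :=
  letI : MeasurableSpace V := borel V
  ∃ μ : Measure V, μ Set.univ = 1 ∧ (∃ K : Set V, IsCompact K ∧ μ K = 1) ∧
    ∃ St : Set V, MeasurableSet St ∧ S ⊆ St ∧
      ∀ v : V, μ ((fun x => x + v) ⁻¹' St) = 0

/-- `S` is a prevalent subset of `V`. -/
def IsPrevalent {V : Type*} [NormedAddCommGroup V] [NormedSpace ℝ V] (S : Set V) : Prop :=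
  IsShy Sᶜ

/-- `F` is the (normalized) lift of an orientation-preserving real analytic expanding circle
map of degree `d` fixing `π(0)`. -/
def AnalyticExpandingLift (F : ℝ → ℝ) (d : ℕ) : Prop :=
  (∀ x : ℝ, AnalyticAt ℝ F x) ∧ (∀ x : ℝ, F (x + 1) = F x + d) ∧ StrictMono F ∧ F 0 = 0 ∧
    2 ≤ d ∧ ∃ C > (0 : ℝ), ∃ l > (1 : ℝ), ∀ n : ℕ, 1 ≤ n → ∀ x : ℝ, C * l ^ n ≤ |deriv (F^[n]) x|

/-- The inverse branches `τ_{i,n} = τ_{i_n} ∘ ⋯ ∘ τ_{i_1}`, where `τ = F⁻¹` and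
`τ_i(x) = τ(x+i)`; the word `i` is indexed from `0`, so `i 0` is the first letter `i_1`. -/
noncomputable def tauIter (F : ℝ → ℝ) {d : ℕ} (i : ℕ → Fin d) : ℕ → ℝ → ℝ
  | 0, x => x
  | n + 1, x => Function.invFun F (tauIter F i n x + ((i n : ℕ) : ℝ))

/-- The function `h^f_i` associated to an infinite word `i`. -/
noncomputable def hSum (F : ℝ → ℝ) {d : ℕ} (i : ℕ → Fin d) (f : Circle1 → ℝ) : ℝ → ℝ :=
  fun x => ∑' n : ℕ,
    (f ((tauIter F i (n + 1) x : ℝ) : Circle1) - f ((tauIter F i (n + 1) 0 : ℝ) : Circle1))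

/-- The function `h^f_i` associated to a finite word of length `m` (the first `m` letters
of `i`). -/
noncomputable def hSumFin (F : ℝ → ℝ) {d : ℕ} (i : ℕ → Fin d) (m : ℕ) (f : Circle1 → ℝ) :
    ℝ → ℝ :=
  fun x => ∑ n ∈ Finset.range m,
    (f ((tauIter F i (n + 1) x : ℝ) : Circle1) - f ((tauIter F i (n + 1) 0 : ℝ) : Circle1))

/-- `i ∈ CL(x,K)`: all backward images of `x` along the word `i` lie over `K`. -/
def WordIn (F : ℝ → ℝ) {d : ℕ} (i : ℕ → Fin d) (x : ℝ) (K : Set Circle1) : Prop :=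
  ∀ n : ℕ, 1 ≤ n → ((tauIter F i n x : ℝ) : Circle1) ∈ K

/-- `x` (a real, lying over `K`) is an `f`-supercritical value of `K`. -/
def IsSupercriticalValue (F : ℝ → ℝ) (d : ℕ) (f : Circle1 → ℝ) (K : Set Circle1) (x : ℝ) :
    Prop :=
  ((x : ℝ) : Circle1) ∈ K ∧ ∃ i j : ℕ → Fin d, WordIn F i x K ∧ WordIn F j x K ∧ i 0 ≠ j 0 ∧
    deriv (hSum F i f) x = deriv (hSum F j f) x

/-- `x` is a critical value of `T|K`. -/
def IsCriticalValue (T : Circle1 → Circle1) (K : Set Circle1) (x : Circle1) : Prop :=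
  x ∈ K ∧ ∃ y z, y ∈ K ∧ z ∈ K ∧ y ≠ z ∧ T y = x ∧ T z = x

/-- A critical value `x` of `T|K` is regular: on each side of `x` there is a continuous
inverse branch of `T` selecting the unique preimage in `K`. -/
def IsRegularCriticalValue (T : Circle1 → Circle1) (K : Set Circle1) (x : Circle1) : Prop :=
  ∃ U : Set Circle1, U ∈ 𝓝 x ∧ IsConnected U ∧
    ∀ b ∈ U \ {x}, ∃ s : Circle1 → Circle1,
      ContinuousOn s (connectedComponentIn (U \ {x}) b) ∧
      (∀ y ∈ connectedComponentIn (U \ {x}) b, T (s y) = y) ∧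
      (∀ y ∈ K ∩ connectedComponentIn (U \ {x}) b, T ⁻¹' {y} ∩ K = {s y})

/-- `T|K` is Sturmian-like: every critical value is regular. -/
def SturmianLike (T : Circle1 → Circle1) (K : Set Circle1) : Prop :=
  ∀ x, IsCriticalValue T K x → IsRegularCriticalValue T K x

/-- `f : ℝ/ℤ → ℝ` is a trigonometric polynomial. -/
def IsTrigPoly (f : Circle1 → ℝ) : Prop :=
  ∃ m : ℕ, ∃ a b : ℕ → ℝ, ∀ x : ℝ,
    f ↑x = a 0 + ∑ k ∈ Finset.range m,
      (a (k + 1) * Real.cos (2 * Real.pi * (k + 1) * x) +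
        b (k + 1) * Real.sin (2 * Real.pi * (k + 1) * x))

end

/-! ### Lifts, the circle map and inverse branches -/

theorem coe_rep (z : Circle1) : ((rep z : ℝ) : Circle1) = z := by
  unfold rep
  exact AddCircle.coe_equivIco

theorem rep_mem_Icc (z : Circle1) : rep z ∈ Icc (0 : ℝ) 1 := by
  have h := (AddCircle.equivIco (1 : ℝ) 0 z).2
  exact ⟨h.1, by simpa [rep] using h.2.le⟩

theorem coe_eq_coe_iff_exists_int {a b : ℝ} :
    ((a : ℝ) : Circle1) = (b : Circle1) ↔ ∃ m : ℤ, a = b + m := by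
  rw [← sub_eq_zero, ← AddCircle.coe_sub, AddCircle.coe_eq_zero_iff]
  constructor
  · rintro ⟨m, hm⟩
    exact ⟨m, by simp at hm; linarith⟩
  · rintro ⟨m, hm⟩
    exact ⟨m, by simp; linarith⟩

/-- A function on the circle is continuous as soon as its lift to `ℝ` is. -/
theorem continuous_circle_of_lift {X : Type*} [TopologicalSpace X] {g : Circle1 → X}
    (h : Continuous fun x : ℝ => g (x : Circle1)) : Continuous g :=
  (QuotientAddGroup.isQuotientMap_mk (AddSubgroup.zmultiples (1 : ℝ))).continuous_iff.2 h

namespace AnalyticExpandingLift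

variable {F : ℝ → ℝ} {d : ℕ}

theorem contDiff (hF : AnalyticExpandingLift F d) : ContDiff ℝ 1 F :=
  contDiff_iff_contDiffAt.2 fun x => (hF.1 x).contDiffAt

theorem continuous (hF : AnalyticExpandingLift F d) : Continuous F := hF.contDiff.continuous

theorem contDiff_iterate (hF : AnalyticExpandingLift F d) (n : ℕ) : ContDiff ℝ 1 F^[n] := by
  induction n with
  | zero => exact contDiff_id
  | succ k ih => exact ih.comp hF.contDiff

theorem injective (hF : AnalyticExpandingLift F d) : Function.Injective F := hF.2.2.1.injective

theorem add_nat (hF : AnalyticExpandingLift F d) (x : ℝ) (m : ℕ) : F (x + m) = F x + m * d := by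
  induction m with
  | zero => simp
  | succ k ih =>
    have := hF.2.1 (x + k)
    push_cast
    rw [← add_assoc, this, ih]
    ring

theorem add_int (hF : AnalyticExpandingLift F d) (x : ℝ) (m : ℤ) : F (x + m) = F x + m * d := by
  obtain ⟨k, rfl | rfl⟩ := m.eq_nat_or_neg
  · simpa using hF.add_nat x k
  · have := hF.add_nat (x - k) k
    push_cast
    rw [sub_add_cancel] at this
    rw [this, ← sub_eq_add_neg]
    ring

theorem iterate_add_int (hF : AnalyticExpandingLift F d) (n : ℕ) (x : ℝ) (m : ℤ) :
    F^[n] (x + m) = F^[n] x + m * (d : ℝ) ^ n := by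
  induction n generalizing x m with
  | zero => simp
  | succ k ih =>
    have h := ih (F x) (m * d)
    push_cast at h
    rw [Function.iterate_succ_apply, Function.iterate_succ_apply, hF.add_int, h]
    ring

theorem surjective (hF : AnalyticExpandingLift F d) : Function.Surjective F := by
  have hd : (1 : ℝ) ≤ d := by exact_mod_cast (by have := hF.2.2.2.2.1; omega : 1 ≤ d)
  have h0 : F 0 = 0 := hF.2.2.2.1
  intro y
  -- `F (-m) = -m d ≤ y ≤ m d = F m` for a natural number `m ≥ |y|`.
  obtain ⟨m, hm⟩ := exists_nat_ge |y|
  have hle := abs_le.1 hm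
  have h1 := hF.add_int 0 m
  have h2 := hF.add_int 0 (-m)
  push_cast at h1 h2
  rw [zero_add, h0, zero_add] at h1 h2
  have hmd : (m : ℝ) ≤ m * d := le_mul_of_one_le_right (Nat.cast_nonneg m) hd
  exact mem_range_of_exists_le_of_exists_ge hF.continuous ⟨-m, by rw [h2]; linarith⟩
    ⟨m, by rw [h1]; linarith⟩

theorem apply_invFun (hF : AnalyticExpandingLift F d) (y : ℝ) : F (Function.invFun F y) = y :=
  Function.rightInverse_invFun hF.surjective y

theorem continuous_invFun (hF : AnalyticExpandingLift F d) :
    Continuous (Function.invFun F) := by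
  have h : Function.invFun F = (hF.2.2.1.orderIsoOfSurjective F hF.surjective).symm := by
    funext y
    apply hF.injective
    rw [hF.apply_invFun]
    exact ((hF.2.2.1.orderIsoOfSurjective F hF.surjective).apply_symm_apply y).symm
  rw [h]
  exact OrderIso.continuous _

/-- On lifts, the circle map is `F` modulo `ℤ`. -/
theorem cmap_coe (hF : AnalyticExpandingLift F d) (x : ℝ) :
    cmap F (x : Circle1) = (F x : Circle1) := by
  obtain ⟨m, hm⟩ := coe_eq_coe_iff_exists_int.1 (coe_rep (x : Circle1))
  unfold cmap
  rw [hm, hF.add_int, coe_eq_coe_iff_exists_int]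
  exact ⟨m * d, by push_cast; rfl⟩

theorem continuous_cmap (hF : AnalyticExpandingLift F d) : Continuous (cmap F) := by
  apply continuous_circle_of_lift
  simp_rw [hF.cmap_coe]
  exact (AddCircle.continuous_mk' (1 : ℝ)).comp hF.continuous

/-- The circle map is locally injective. -/
theorem locally_injective (hF : AnalyticExpandingLift F d) (z : Circle1) :
    ∃ V ∈ 𝓝 z, InjOn (cmap F) V := by
  -- `V` is the image of an interval on which `F` varies by less than `1`.
  have hV : {u : ℝ | |F u - F (rep z)| < 1 / 2} ∈ 𝓝 (rep z) := by
    have : Tendsto (fun u => |F u - F (rep z)|) (𝓝 (rep z)) (𝓝 |F (rep z) - F (rep z)|) :=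
      ((hF.continuous.sub continuous_const).abs).tendsto _
    apply this.eventually_lt_const
    simp
  refine ⟨(fun u : ℝ => (u : Circle1)) '' {u : ℝ | |F u - F (rep z)| < 1 / 2}, ?_, ?_⟩
  · have := (QuotientAddGroup.isOpenMap_coe
      (N := AddSubgroup.zmultiples (1 : ℝ))).image_mem_nhds hV
    rw [coe_rep] at this
    exact this
  · rintro _ ⟨u, hu, rfl⟩ _ ⟨v, hv, rfl⟩ huv
    simp only [hF.cmap_coe] at huv
    obtain ⟨m, hm⟩ := coe_eq_coe_iff_exists_int.1 huv
    simp only [mem_ofPred_eq, abs_lt] at hu hv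
    have h1 : (-1 : ℝ) < m := by linarith
    have h2 : (m : ℝ) < 1 := by linarith
    have h3 : m = 0 := by
      have h1 : (-1 : ℤ) < m := by exact_mod_cast h1
      have h2 : m < 1 := by exact_mod_cast h2
      omega
    rw [h3] at hm
    simp only [Int.cast_zero, add_zero] at hm
    simp [hF.injective hm]

theorem cmap_tauIter_succ (hF : AnalyticExpandingLift F d) (i : ℕ → Fin d) (n : ℕ) (x : ℝ) :
    cmap F (tauIter F i (n + 1) x : Circle1) = (tauIter F i n x : Circle1) := by
  rw [hF.cmap_coe, tauIter, hF.apply_invFun, coe_eq_coe_iff_exists_int]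
  exact ⟨(i n : ℕ), by simp⟩

/-- Every preimage of a point under the circle map is reached by one of the `d` inverse
branches, applied to any given lift of that point. -/
theorem exists_branch (hF : AnalyticExpandingLift F d) {t : ℝ} {y : Circle1}
    (h : cmap F y = (t : Circle1)) :
    ∃ c : Fin d, ((Function.invFun F (t + ((c : ℕ) : ℝ)) : ℝ) : Circle1) = y := by
  have hd : 0 < d := by have := hF.2.2.2.2.1; omega
  rw [← coe_rep y, hF.cmap_coe] at h
  obtain ⟨m, hm⟩ := coe_eq_coe_iff_exists_int.1 h
  have hd' : (d : ℤ) ≠ 0 := by omega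
  have hnn := Int.emod_nonneg m hd'
  refine ⟨⟨(m % d).toNat, by have := Int.emod_lt_of_pos m (by omega : (0 : ℤ) < d); omega⟩, ?_⟩
  have hc : (((m % d).toNat : ℕ) : ℝ) = m - d * ((m / d : ℤ) : ℝ) := by
    have h1 : (((m % d).toNat : ℕ) : ℤ) = m - d * (m / d) := by
      rw [Int.toNat_of_nonneg hnn, Int.emod_def]
    exact_mod_cast congrArg (Int.cast : ℤ → ℝ) h1
  have hy : Function.invFun F (t + (((m % d).toNat : ℕ) : ℝ)) = rep y + ((-(m / d) : ℤ) : ℝ) := by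
    apply hF.injective
    rw [hF.apply_invFun, hF.add_int, hm, hc]
    push_cast
    ring
  simp only
  rw [hy]
  conv_rhs => rw [← coe_rep y]
  exact coe_eq_coe_iff_exists_int.2 ⟨_, rfl⟩

/-- Distinct first letters give distinct points of the circle. -/
theorem invFun_ne (hF : AnalyticExpandingLift F d) (x : ℝ) {a b : Fin d} (hab : a ≠ b) :
    ((Function.invFun F (x + ((a : ℕ) : ℝ)) : ℝ) : Circle1) ≠
      (Function.invFun F (x + ((b : ℕ) : ℝ)) : ℝ) := by
  intro h
  obtain ⟨m, hm⟩ := coe_eq_coe_iff_exists_int.1 h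
  have h1 := congrArg F hm
  rw [hF.apply_invFun, hF.add_int, hF.apply_invFun] at h1
  have h2 : ((a : ℕ) : ℤ) - ((b : ℕ) : ℤ) = d * m := by
    have : (((a : ℕ) : ℝ)) - ((b : ℕ) : ℝ) = d * m := by linarith
    exact_mod_cast this
  have h3 : (((a : ℕ) : ℤ) - ((b : ℕ) : ℤ)) = 0 := by
    apply Int.eq_zero_of_abs_lt_dvd (m := d) ⟨m, h2⟩
    have := a.2
    have := b.2
    rw [abs_lt]
    omega
  exact hab (Fin.ext (by omega))

/-! ### Contraction along inverse branches -/

theorem continuous_tauIter (hF : AnalyticExpandingLift F d) (i : ℕ → Fin d) (n : ℕ) :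
    Continuous (tauIter F i n) := by
  induction n with
  | zero => exact continuous_id
  | succ k ih => exact hF.continuous_invFun.comp (ih.add continuous_const)

theorem iterate_tauIter (hF : AnalyticExpandingLift F d) (i : ℕ → Fin d) (n : ℕ) :
    ∃ N : ℝ, ∀ x, F^[n] (tauIter F i n x) = x + N := by
  induction n with
  | zero => exact ⟨0, fun x => by simp [tauIter]⟩
  | succ k ih =>
    obtain ⟨N, hN⟩ := ih
    refine ⟨N + ((i k : ℕ) : ℝ) * (d : ℝ) ^ k, fun x => ?_⟩
    have := hF.iterate_add_int k (tauIter F i k x) (i k : ℕ)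
    rw [Int.cast_natCast] at this
    rw [Function.iterate_succ_apply, tauIter, hF.apply_invFun, this, hN]
    ring

/-- The expansion estimate, with `C⁻¹ l⁻ⁿ` packaged as a bound `A * q ^ n`, `q < 1`. -/
theorem exists_contraction (hF : AnalyticExpandingLift F d) :
    ∃ A q : ℝ, 0 ≤ A ∧ 0 ≤ q ∧ q < 1 ∧ ∀ (n : ℕ) (x : ℝ),
      deriv F^[n + 1] x ≠ 0 ∧ |(deriv F^[n + 1] x)⁻¹| ≤ A * q ^ n := by
  obtain ⟨C, hC, l, hl, h⟩ := hF.2.2.2.2.2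
  have hl0 : 0 < l := by linarith
  refine ⟨(C * l)⁻¹, l⁻¹, by positivity, by positivity, inv_lt_one_of_one_lt₀ hl, fun n x => ?_⟩
  have h1 := h (n + 1) (by omega) x
  have h2 : 0 < C * l ^ (n + 1) := by positivity
  refine ⟨fun h0 => ?_, ?_⟩
  · rw [h0, abs_zero] at h1
    linarith
  · rw [abs_inv, inv_pow, ← mul_inv]
    apply inv_anti₀ (by positivity)
    calc C * l * l ^ n = C * l ^ (n + 1) := by ring
      _ ≤ _ := h1

theorem hasDerivAt_tauIter (hF : AnalyticExpandingLift F d) (i : ℕ → Fin d) (n : ℕ) (x : ℝ) :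
    HasDerivAt (tauIter F i (n + 1)) (deriv F^[n + 1] (tauIter F i (n + 1) x))⁻¹ x := by
  obtain ⟨A, q, -, -, -, h⟩ := hF.exists_contraction
  obtain ⟨N, hN⟩ := hF.iterate_tauIter i (n + 1)
  have h1 : HasDerivAt (fun y => F^[n + 1] y - N)
      (deriv F^[n + 1] (tauIter F i (n + 1) x)) (tauIter F i (n + 1) x) :=
    (((hF.contDiff_iterate (n + 1)).differentiable one_ne_zero _).hasDerivAt).sub_const N
  exact h1.of_local_left_inverse (hF.continuous_tauIter i (n + 1)).continuousAt
    (h n _).1 (Eventually.of_forall fun y => by rw [hN]; ring)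

theorem abs_tauIter_sub_le (hF : AnalyticExpandingLift F d) {A q : ℝ}
    (h : ∀ (n : ℕ) (x : ℝ), deriv F^[n + 1] x ≠ 0 ∧ |(deriv F^[n + 1] x)⁻¹| ≤ A * q ^ n)
    (i : ℕ → Fin d) (n : ℕ) (x y : ℝ) :
    |tauIter F i (n + 1) x - tauIter F i (n + 1) y| ≤ A * q ^ n * |x - y| := by
  have := convex_univ.norm_image_sub_le_of_norm_hasDerivWithin_le
    (f := tauIter F i (n + 1)) (C := A * q ^ n)
    (fun z _ => (hF.hasDerivAt_tauIter i n z).hasDerivWithinAt)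
    (fun z _ => (h n _).2) (mem_univ y) (mem_univ x)
  simpa using this

theorem periodic_deriv_iterate (hF : AnalyticExpandingLift F d) (n : ℕ) {a b : ℝ}
    (hab : (a : Circle1) = b) : deriv F^[n] a = deriv F^[n] b := by
  obtain ⟨m, rfl⟩ := coe_eq_coe_iff_exists_int.1 hab
  rw [← deriv_comp_add_const]
  simp_rw [hF.iterate_add_int]
  simp

end AnalyticExpandingLift

/-! ### Building words, and the derivative of `h^f_i` -/

/-- A word whose `k`-th letter satisfies a condition depending on the position reached so far. -/
theorem exists_word (F : ℝ → ℝ) {d : ℕ} (x : ℝ) (R : ℕ → ℝ → Fin d → Prop)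
    (h : ∀ k t, ∃ c, R k t c) : ∃ i : ℕ → Fin d, ∀ k, R k (tauIter F i k x) (i k) := by
  choose c hc using h
  let S : ℕ → ℝ := fun k =>
    Nat.rec x (fun k t => Function.invFun F (t + ((c k t : ℕ) : ℝ))) k
  have hS : ∀ k, tauIter F (fun k => c k (S k)) k x = S k := by
    intro k
    induction k with
    | zero => rfl
    | succ k ih => rw [tauIter, ih]
  exact ⟨fun k => c k (S k), fun k => by rw [hS]; exact hc _ _⟩

/-- Every backward orbit of the circle map is coded by a word, from any lift of its base point. -/
theorem AnalyticExpandingLift.exists_coding {F : ℝ → ℝ} {d : ℕ} (hF : AnalyticExpandingLift F d)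
    (x : ℝ) (Y : ℕ → Circle1) (h0 : Y 0 = (x : Circle1)) (hY : ∀ k, cmap F (Y (k + 1)) = Y k) :
    ∃ i : ℕ → Fin d, ∀ k, ((tauIter F i k x : ℝ) : Circle1) = Y k := by
  obtain ⟨i, hi⟩ := exists_word F (d := d) x
    (fun k t c => (t : Circle1) = Y k →
      ((Function.invFun F (t + ((c : ℕ) : ℝ)) : ℝ) : Circle1) = Y (k + 1)) (by
    intro k t
    by_cases ht : (t : Circle1) = Y k
    · obtain ⟨c, hc⟩ := hF.exists_branch (t := t) (y := Y (k + 1)) (by rw [hY, ht])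
      exact ⟨c, fun _ => hc⟩
    · exact ⟨⟨0, by have := hF.2.2.2.2.1; omega⟩, fun h => absurd h ht⟩)
  refine ⟨i, fun k => ?_⟩
  induction k with
  | zero => exact h0.symm
  | succ k ih => exact hi k ih

/-- The series `∑ f'(Y_k) / (T^k)'(Y_k)`, `k ≥ 1`, along (lifts `Y_k` of) a backward orbit. It
represents the derivative of `h^f_i` and only depends on the `Y_k` modulo `ℤ`. -/
noncomputable def derivSeries (F : ℝ → ℝ) (f : Circle1 → ℝ) (Y : ℕ → ℝ) : ℝ :=
  ∑' k : ℕ, deriv (fun x : ℝ => f x) (Y (k + 1)) * (deriv F^[k + 1] (Y (k + 1)))⁻¹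

theorem deriv_lift_congr (f : Circle1 → ℝ) {a b : ℝ} (hab : (a : Circle1) = b) :
    deriv (fun x : ℝ => f x) a = deriv (fun x : ℝ => f x) b := by
  obtain ⟨m, rfl⟩ := coe_eq_coe_iff_exists_int.1 hab
  rw [← deriv_comp_add_const]
  congr 1
  funext x
  rw [coe_eq_coe_iff_exists_int.2 ⟨m, rfl⟩]

theorem derivSeries_congr {F : ℝ → ℝ} {d : ℕ} (hF : AnalyticExpandingLift F d) (f : Circle1 → ℝ)
    {Y Z : ℕ → ℝ} (h : ∀ k, (Y k : Circle1) = Z k) : derivSeries F f Y = derivSeries F f Z := by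
  unfold derivSeries
  refine tsum_congr fun k => ?_
  rw [deriv_lift_congr f (h (k + 1)), hF.periodic_deriv_iterate (k + 1) (h (k + 1))]

theorem exists_deriv_bound {f : Circle1 → ℝ} (hf : ContDiff ℝ 1 fun x : ℝ => f x) :
    ∃ M : ℝ, ∀ x, |deriv (fun x : ℝ => f x) x| ≤ M := by
  have hp : Function.Periodic (deriv fun x : ℝ => f x) 1 := fun x =>
    deriv_lift_congr f (by simp)
  obtain ⟨M, hM⟩ := (hp.isBounded_of_continuous one_ne_zero
    (hf.continuous_deriv le_rfl)).exists_norm_le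
  exact ⟨M, fun x => hM _ (mem_range_self x)⟩

theorem deriv_hSum {F : ℝ → ℝ} {d : ℕ} (hF : AnalyticExpandingLift F d) {f : Circle1 → ℝ}
    (hf : ContDiff ℝ 1 fun x : ℝ => f x) (i : ℕ → Fin d) (x : ℝ) :
    deriv (hSum F i f) x = derivSeries F f fun k => tauIter F i k x := by
  obtain ⟨M, hM⟩ := exists_deriv_bound hf
  obtain ⟨A, q, hA, hq0, hq1, h⟩ := hF.exists_contraction
  have hsum : Summable fun n : ℕ => M * (A * q ^ n) :=
    ((summable_geometric_of_lt_one hq0 hq1).mul_left A).mul_left M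
  have hM0 : 0 ≤ M := (abs_nonneg _).trans (hM 0)
  refine (hasDerivAt_tsum (y₀ := 0) (u := fun n => M * (A * q ^ n)) hsum
    (g' := fun n y => deriv (fun x : ℝ => f x) (tauIter F i (n + 1) y) *
      (deriv F^[n + 1] (tauIter F i (n + 1) y))⁻¹)
    (fun n y => ?_) (fun n y => ?_) ?_ x).deriv
  · have h1 := (hf.differentiable one_ne_zero (tauIter F i (n + 1) y)).hasDerivAt
    exact (h1.comp y (hF.hasDerivAt_tauIter i n y)).sub_const _
  · rw [norm_mul]
    exact mul_le_mul (hM _) (h n _).2 (abs_nonneg _) hM0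
  · simp

/-! ### A priori Lipschitz bound for calibrated sub-actions -/

theorem exists_lift_dist (a b : Circle1) :
    ∃ x y : ℝ, (x : Circle1) = a ∧ (y : Circle1) = b ∧ |x - y| = dist a b := by
  refine ⟨rep a - round (rep a - rep b), rep b, ?_, coe_rep b, ?_⟩
  · conv_rhs => rw [← coe_rep a]
    exact coe_eq_coe_iff_exists_int.2 ⟨-round (rep a - rep b), by push_cast; ring⟩
  · conv_rhs => rw [← coe_rep a, ← coe_rep b, dist_eq_norm, ← AddCircle.coe_sub]
    rw [UnitAddCircle.norm_eq]
    congr 1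
    ring

/-- Calibrated sub-actions have a Lipschitz constant depending only on the contraction constants
and on a bound `M` for `f'`: follow an optimal backward orbit of one point, shadow it by the
backward orbit of the other point along the same word, and let the length tend to infinity. -/
theorem gset_lipschitz {F : ℝ → ℝ} {d : ℕ} (hF : AnalyticExpandingLift F d) {A q : ℝ}
    (hA : 0 ≤ A) (hq0 : 0 ≤ q) (hq1 : q < 1)
    (h : ∀ (n : ℕ) (x : ℝ), deriv F^[n + 1] x ≠ 0 ∧ |(deriv F^[n + 1] x)⁻¹| ≤ A * q ^ n)
    {f : Circle1 → ℝ} (hf : ContDiff ℝ 1 fun x : ℝ => f x) {M : ℝ}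
    (hM : ∀ x, |deriv (fun x : ℝ => f x) x| ≤ M) {g : Circle1 → ℝ}
    (hg : g ∈ Gset f (cmap F)) (a b : Circle1) :
    g a - g b ≤ M * A * (1 - q)⁻¹ * dist a b := by
  obtain ⟨⟨K, hK⟩, ⟨-, hsub⟩, hcal⟩ := hg
  obtain ⟨x, y, rfl, rfl, hxy⟩ := exists_lift_dist a b
  rw [← hxy]
  have hM0 : 0 ≤ M := (abs_nonneg _).trans (hM 0)
  have hfl : ∀ s t : ℝ, f s - f t ≤ M * |s - t| := fun s t => by
    have := convex_univ.norm_image_sub_le_of_norm_hasDerivWithin_le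
      (f := fun x : ℝ => f x) (C := M)
      (fun z _ => (hf.differentiable one_ne_zero z).hasDerivAt.hasDerivWithinAt)
      (fun z _ => hM z) (mem_univ t) (mem_univ s)
    exact (le_abs_self _).trans this
  obtain ⟨i, hi⟩ := exists_word F (d := d) x
    (fun _ t c => g ((Function.invFun F (t + ((c : ℕ) : ℝ)) : ℝ) : Circle1) +
      f ((Function.invFun F (t + ((c : ℕ) : ℝ)) : ℝ) : Circle1) = g t + beta f (cmap F)) (by
    intro _ t
    obtain ⟨z, hz, hgz⟩ := hcal t
    obtain ⟨c, hc⟩ := hF.exists_branch hz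
    exact ⟨c, by rw [hc]; exact hgz⟩)
  have hstep : ∀ n, g (tauIter F i n x) - g (tauIter F i n y) ≤
      g (tauIter F i (n + 1) x) - g (tauIter F i (n + 1) y) + M * (A * q ^ n * |x - y|) := by
    intro n
    have h1 : g (tauIter F i (n + 1) x) + f (tauIter F i (n + 1) x) =
      g (tauIter F i n x) + beta f (cmap F) := hi n
    have h2 := hsub (tauIter F i (n + 1) y)
    rw [hF.cmap_tauIter_succ] at h2
    have h3 := hfl (tauIter F i (n + 1) x) (tauIter F i (n + 1) y)
    have h4 := mul_le_mul_of_nonneg_left (hF.abs_tauIter_sub_le h i n x y) hM0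
    linarith
  have hsum : ∀ n, g x - g y ≤ g (tauIter F i n x) - g (tauIter F i n y) +
      ∑ k ∈ Finset.range n, M * (A * q ^ k * |x - y|) := by
    intro n
    induction n with
    | zero => simp [tauIter]
    | succ n ih =>
      rw [Finset.sum_range_succ]
      linarith [hstep n]
  have hgeom : ∀ n, ∑ k ∈ Finset.range n, M * (A * q ^ k * |x - y|) ≤
      M * A * (1 - q)⁻¹ * |x - y| := by
    intro n
    have h1 : ∑ k ∈ Finset.range n, q ^ k ≤ (1 - q)⁻¹ := by
      rw [← tsum_geometric_of_lt_one hq0 hq1]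
      exact (summable_geometric_of_lt_one hq0 hq1).sum_le_tsum _ fun k _ => pow_nonneg hq0 k
    calc ∑ k ∈ Finset.range n, M * (A * q ^ k * |x - y|)
        = M * A * (∑ k ∈ Finset.range n, q ^ k) * |x - y| := by
          rw [Finset.mul_sum, Finset.sum_mul]
          exact Finset.sum_congr rfl fun k _ => by ring
      _ ≤ _ := by gcongr
  have hbound : ∀ n : ℕ, g x - g y ≤ K * (A * q ^ n * |x - y|) + M * A * (1 - q)⁻¹ * |x - y| := by
    intro n
    have h1 := (le_abs_self _).trans (hK.dist_le_mul (tauIter F i (n + 1) x : Circle1)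
      (tauIter F i (n + 1) y : Circle1))
    have h2 : dist (tauIter F i (n + 1) x : Circle1) (tauIter F i (n + 1) y : Circle1) ≤
        |tauIter F i (n + 1) x - tauIter F i (n + 1) y| := by
      rw [dist_eq_norm, ← AddCircle.coe_sub]
      exact QuotientAddGroup.norm_mk_le_norm
    have h3 := mul_le_mul_of_nonneg_left (h2.trans (hF.abs_tauIter_sub_le h i n x y)) K.2
    have := hsum (n + 1)
    have := hgeom (n + 1)
    simp only [NNReal.val_eq_coe] at h3
    linarith
  have hlim : Tendsto (fun n : ℕ => K * (A * q ^ n * |x - y|) + M * A * (1 - q)⁻¹ * |x - y|) atTop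
      (𝓝 (K * (A * 0 * |x - y|) + M * A * (1 - q)⁻¹ * |x - y|)) :=
    ((((tendsto_pow_atTop_nhds_zero_of_lt_one hq0 hq1).const_mul A).mul_const _).const_mul _
      ).add_const _
  have := ge_of_tendsto' hlim hbound
  simpa using this

/-! ### Continuity of `β` and closedness of `K(f,T)` under limits -/

theorem beta_le_add {F : ℝ → ℝ} {d : ℕ} (hF : AnalyticExpandingLift F d) {f f' : Circle1 → ℝ}
    (hf : Continuous f) (hf' : Continuous f') {ε : ℝ} (h : ∀ x, |f x - f' x| ≤ ε) :
    beta f (cmap F) ≤ beta f' (cmap F) + ε := by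
  have hint : ∀ (g : Circle1 → ℝ), Continuous g → ∀ (μ : Measure Circle1)
      [IsProbabilityMeasure μ], Integrable g μ := fun g hg μ _ =>
    hg.integrable_of_hasCompactSupport (HasCompactSupport.of_compactSpace g)
  obtain ⟨B, hB⟩ := (isCompact_range hf').isBounded.exists_norm_le
  unfold beta
  apply csSup_le
  · -- The Dirac mass at the fixed point `π(0)` is invariant.
    refine Set.Nonempty.image _ ⟨Measure.dirac (0 : Circle1), inferInstance, ?_⟩
    rw [Measure.map_dirac' hF.continuous_cmap.measurable]
    have := hF.cmap_coe 0
    rw [hF.2.2.2.1] at this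
    exact congrArg Measure.dirac this
  · rintro _ ⟨μ, hμ, rfl⟩
    have := hμ.1
    have h1 : ∫ x, f x ∂μ ≤ ∫ x, (f' x + ε) ∂μ :=
      integral_mono (hint f hf μ) ((hint f' hf' μ).add (integrable_const ε)) fun x => by
        have := (abs_le.1 (h x)).2
        simp only
        linarith
    rw [integral_add (hint f' hf' μ) (integrable_const ε)] at h1
    simp only [integral_const, probReal_univ, one_smul] at h1
    refine h1.trans ((add_le_add_iff_right ε).2 (le_csSup ⟨B, ?_⟩ (mem_image_of_mem _ hμ)))
    rintro _ ⟨ν, hν, rfl⟩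
    have := hν.1
    have h2 : ∫ x, f' x ∂ν ≤ ∫ _, B ∂ν :=
      integral_mono (hint f' hf' ν) (integrable_const B) fun x =>
        (le_abs_self _).trans (hB _ (mem_range_self x))
    simpa using h2

theorem IsCompact.exists_tendsto_ultrafilter {X : Type*} [TopologicalSpace X] {s : Set X}
    (hs : IsCompact s) (U : Ultrafilter ℕ) {u : ℕ → X} (hu : ∀ᶠ n in (U : Filter ℕ), u n ∈ s) :
    ∃ x ∈ s, Tendsto u U (𝓝 x) :=
  hs.ultrafilter_le_nhds (U.map u) (le_principal_iff.2 hu)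

/-- Upper semicontinuity of `f ↦ K(f,T)` along an ultrafilter, for functions converging
continuously and with equi-Lipschitz calibrated sub-actions. Normalized sub-actions `g_n - g_n(0)`
converge pointwise along the ultrafilter to a calibrated sub-action of the limit function. -/
theorem mem_Kset_of_tendsto {T : Circle1 → Circle1} (hT : Continuous T) (U : Ultrafilter ℕ)
    {f : ℕ → Circle1 → ℝ} {f0 : Circle1 → ℝ}
    (hf : ∀ (u : ℕ → Circle1) (a : Circle1), Tendsto u U (𝓝 a) →
      Tendsto (fun n => f n (u n)) U (𝓝 (f0 a)))
    (hβ : Tendsto (fun n => beta (f n) T) U (𝓝 (beta f0 T))) {L : ℝ} (hL0 : 0 ≤ L)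
    (hL : ∀ᶠ n in (U : Filter ℕ), ∀ g ∈ Gset (f n) T, ∀ a b, g a - g b ≤ L * dist a b)
    {y : ℕ → Circle1} {z : Circle1} (hy : Tendsto y U (𝓝 z)) (hyK : ∀ n, y n ∈ Kset (f n) T) :
    z ∈ Kset f0 T := by
  have hyK' : ∀ n, ∃ g ∈ Gset (f n) T, y n ∈ Lambda (f n) T g := fun n => by
    have := hyK n
    simp only [Kset, mem_iUnion, exists_prop] at this
    exact this
  choose g hgG hgL using hyK'
  have hdist : ∀ᶠ n in (U : Filter ℕ), ∀ a b, |g n a - g n b| ≤ L * dist a b := by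
    filter_upwards [hL] with n hn a b
    rw [abs_le]
    have h1 := hn _ (hgG n) a b
    have h2 := hn _ (hgG n) b a
    rw [dist_comm] at h2
    constructor <;> linarith
  have hlim : ∀ a, ∃ v, Tendsto (fun n => g n a - g n 0) U (𝓝 v) := fun a => by
    obtain ⟨v, -, hv⟩ := (isCompact_Icc (a := -(L * dist a 0)) (b := L * dist a 0)
      ).exists_tendsto_ultrafilter U (u := fun n => g n a - g n 0) (by
        filter_upwards [hdist] with n hn
        exact abs_le.1 (hn a 0))
    exact ⟨v, hv⟩
  choose G hG using hlim
  have hGL : ∀ a b, |G a - G b| ≤ L * dist a b := fun a b => by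
    refine le_of_tendsto ((hG a).sub (hG b)).abs ?_
    filter_upwards [hdist] with n hn
    simpa using hn a b
  -- Equicontinuity upgrades pointwise convergence to convergence along moving points.
  have hmove : ∀ (u : ℕ → Circle1) (a : Circle1), Tendsto u U (𝓝 a) →
      Tendsto (fun n => g n (u n) - g n 0) U (𝓝 (G a)) := fun u a hu => by
    have h0 : Tendsto (fun n => g n (u n) - g n a) U (𝓝 0) := by
      have h1 : Tendsto (fun n => L * dist (u n) a) U (𝓝 0) := by
        simpa using (tendsto_iff_dist_tendsto_zero.1 hu).const_mul L
      refine squeeze_zero_norm' ?_ h1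
      filter_upwards [hdist] with n hn
      exact hn _ _
    simpa using h0.add (hG a)
  have hlhs : ∀ (u : ℕ → Circle1) (a : Circle1), Tendsto u U (𝓝 a) →
      Tendsto (fun n => g n (u n) - g n 0 + f n (u n)) U (𝓝 (G a + f0 a)) := fun u a hu =>
    (hmove u a hu).add (hf u a hu)
  have hrhs : ∀ (u : ℕ → Circle1) (a : Circle1), Tendsto u U (𝓝 a) →
      Tendsto (fun n => g n (u n) - g n 0 + beta (f n) T) U (𝓝 (G a + beta f0 T)) :=
    fun u a hu => (hmove u a hu).add hβ
  have hTu : ∀ (u : ℕ → Circle1) (a : Circle1), Tendsto u U (𝓝 a) →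
      Tendsto (fun n => T (u n)) U (𝓝 (T a)) := fun u a hu => (hT.tendsto a).comp hu
  have hE : ∀ (u : ℕ → Circle1) (a : Circle1), Tendsto u U (𝓝 a) →
      (∀ n, u n ∈ Eset (f n) T (g n)) → a ∈ Eset f0 T G := fun u a hu hmem => by
    refine tendsto_nhds_unique (hlhs u a hu) ((hrhs _ _ (hTu u a hu)).congr fun n => ?_)
    have : g n (u n) + f n (u n) = g n (T (u n)) + beta (f n) T := hmem n
    linarith
  have hGlip : LipschitzWith ⟨L, hL0⟩ G := LipschitzWith.of_dist_le_mul fun a b => hGL a b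
  have hGmem : G ∈ Gset f0 T := by
    refine ⟨⟨_, hGlip⟩, ⟨hGlip.continuous, fun a => ?_⟩, fun a => ?_⟩
    · refine le_of_tendsto_of_tendsto' (hlhs _ a tendsto_const_nhds)
        (hrhs _ _ (hTu _ a tendsto_const_nhds)) fun n => ?_
      have := (hgG n).2.1.2 a
      linarith
    · have hpre := fun n => (hgG n).2.2 a
      choose w hwT hw using hpre
      obtain ⟨b, -, hb⟩ := isCompact_univ.exists_tendsto_ultrafilter U (u := w) (by simp)
      have hTb : T b = a := tendsto_nhds_unique (hTu w b hb) (by simp [hwT])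
      refine ⟨b, hTb, ?_⟩
      have := hE w b hb fun n => by
        change g n (w n) + f n (w n) = g n (T (w n)) + beta (f n) T
        rw [hwT, hw]
      rw [← hTb]
      exact this
  simp only [Kset, mem_iUnion, exists_prop]
  refine ⟨G, hGmem, mem_iInter.2 fun m => ?_⟩
  have hpre := fun n => mem_iInter.1 (hgL n) m
  choose w hwΛ hw using hpre
  obtain ⟨b, -, hb⟩ := isCompact_univ.exists_tendsto_ultrafilter U (u := w) (by simp)
  have hit : ∀ k, Tendsto (fun n => T^[k] (w n)) U (𝓝 (T^[k] b)) := fun k =>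
    ((hT.iterate k).tendsto b).comp hb
  refine ⟨b, fun k => hE _ _ (hit k) fun n => hwΛ n k, ?_⟩
  exact tendsto_nhds_unique (hit m) (hy.congr fun n => (hw n).symm)

/-! ### Passing to the limit -/

theorem tendstoUniformly_of_tendsto {fseq : ℕ → CrFun 1} {f0 : CrFun 1}
    (hconv : Tendsto fseq atTop (𝓝 f0)) :
    TendstoUniformly (fun n (x : ℝ) => (fseq n).1 x) (fun x : ℝ => f0.1 x) atTop ∧
    TendstoUniformly (fun n => deriv fun x : ℝ => (fseq n).1 x)
      (deriv fun x : ℝ => f0.1 x) atTop := by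
  have h1 : Tendsto (fun n => crSeq 1 fun x : ℝ => (fseq n).1 x) atTop
      (𝓝 (crSeq 1 fun x : ℝ => f0.1 x)) := (continuous_induced_dom.tendsto f0).comp hconv
  rw [tendsto_pi_nhds] at h1
  have h0 := UniformFun.tendsto_iff_tendstoUniformly.1 (h1 0)
  have h1 := UniformFun.tendsto_iff_tendstoUniformly.1 (h1 1)
  constructor
  · simpa [crSeq, Function.comp_def] using h0
  · simpa [crSeq, Function.comp_def] using h1

/-- Proposition 3.7: having no supercritical value is an open property in `𝓒^1`: if
`f_n → f_0` in the `C^1` topology and every `f_n` has a supercritical value, then `f_0` has a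
supercritical value. -/
theorem no_supercritical_open (F : ℝ → ℝ) (d : ℕ) (hF : AnalyticExpandingLift F d)
    (fseq : ℕ → CrFun 1) (f0 : CrFun 1) (hconv : Tendsto fseq atTop (𝓝 f0))
    (hsc : ∀ n, ∃ x : ℝ,
      IsSupercriticalValue F d (fseq n).1 (Kset (fseq n).1 (cmap F)) x) :
    ∃ x : ℝ, IsSupercriticalValue F d f0.1 (Kset f0.1 (cmap F)) x := by
  classical
  obtain ⟨hunif, hunif'⟩ := tendstoUniformly_of_tendsto hconv
  obtain ⟨A, q, hA, hq0, hq1, hcontr⟩ := hF.exists_contraction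
  obtain ⟨M0, hM0⟩ := exists_deriv_bound f0.2
  let U : Ultrafilter ℕ := hyperfilter ℕ
  have hU : (U : Filter ℕ) ≤ atTop := Nat.hyperfilter_le_atTop
  have hcont : ∀ f : CrFun 1, Continuous f.1 := fun f =>
    continuous_circle_of_lift f.2.continuous
  set M := M0 + 1 with hMdef
  have hM : ∀ᶠ n in (U : Filter ℕ), ∀ x, |deriv (fun x : ℝ => (fseq n).1 x) x| ≤ M := by
    filter_upwards [hU (Metric.tendstoUniformly_iff.1 hunif' 1 one_pos)] with n hn x
    have h1 := hn x
    rw [Real.dist_eq, abs_sub_comm] at h1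
    have h2 := abs_sub_abs_le_abs_sub (deriv (fun x : ℝ => (fseq n).1 x) x)
      (deriv (fun x : ℝ => f0.1 x) x)
    linarith [hM0 x]
  have hMnn : 0 ≤ M := by linarith [(abs_nonneg _).trans (hM0 0)]
  have hclose : ∀ ε > 0, ∀ᶠ n in (U : Filter ℕ), ∀ a, |(fseq n).1 a - f0.1 a| < ε := by
    intro ε hε
    filter_upwards [hU (Metric.tendstoUniformly_iff.1 hunif ε hε)] with n hn a
    have := hn (rep a)
    rwa [coe_rep, Real.dist_eq, abs_sub_comm] at this
  have hunifC : TendstoUniformly (fun n => (fseq n).1) f0.1 U := by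
    rw [Metric.tendstoUniformly_iff]
    intro ε hε
    filter_upwards [hclose ε hε] with n hn a
    rw [dist_comm]
    exact hn a
  have hβ : Tendsto (fun n => beta (fseq n).1 (cmap F)) U (𝓝 (beta f0.1 (cmap F))) := by
    rw [Metric.tendsto_nhds]
    intro ε hε
    filter_upwards [hclose (ε / 2) (half_pos hε)] with n hn
    have h1 := beta_le_add hF (hcont (fseq n)) (hcont f0) fun x => (hn x).le
    have h2 := beta_le_add hF (hcont f0) (hcont (fseq n)) fun x => by
      rw [abs_sub_comm]
      exact (hn x).le
    rw [Real.dist_eq, abs_lt]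
    constructor <;> linarith
  have hL : ∀ᶠ n in (U : Filter ℕ), ∀ g ∈ Gset (fseq n).1 (cmap F), ∀ a b,
      g a - g b ≤ M * A * (1 - q)⁻¹ * dist a b := by
    filter_upwards [hM] with n hn g hg a b
    exact gset_lipschitz hF hA hq0 hq1 hcontr (fseq n).2 hn hg a b
  have hL0 : 0 ≤ M * A * (1 - q)⁻¹ :=
    mul_nonneg (mul_nonneg hMnn hA) (inv_nonneg.2 (by linarith))
  have hK : ∀ {y : ℕ → Circle1} {z : Circle1}, Tendsto y U (𝓝 z) →
      (∀ n, y n ∈ Kset (fseq n).1 (cmap F)) → z ∈ Kset f0.1 (cmap F) := fun hy hyK =>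
    mem_Kset_of_tendsto hF.continuous_cmap U
      (fun u a hu => hunifC.tendsto_comp (hcont f0).continuousAt hu) hβ hL0 hL hy hyK
  choose x hxK i j hi hj hij hderiv using hsc
  -- For any choice of words, the representatives in `[0,1]` of the backward orbits converge
  -- along the ultrafilter, and so do the series for the derivatives.
  have key : ∀ w : ℕ → ℕ → Fin d, (∀ n, WordIn F (w n) (x n) (Kset (fseq n).1 (cmap F))) →
      ∃ Y : ℕ → ℝ, (∀ k, Tendsto (fun n => ((tauIter F (w n) k (x n) : ℝ) : Circle1)) U
          (𝓝 (Y k : Circle1))) ∧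
        (∀ k, (Y k : Circle1) ∈ Kset f0.1 (cmap F)) ∧
        (∀ k, cmap F (Y (k + 1) : Circle1) = Y k) ∧
        Tendsto (fun n => deriv (hSum F (w n) (fseq n).1) (x n)) U
          (𝓝 (derivSeries F f0.1 Y)) := by
    intro w hw
    let y : ℕ → ℕ → ℝ := fun n k => rep (tauIter F (w n) k (x n))
    have hyc : ∀ n k, (y n k : Circle1) = tauIter F (w n) k (x n) := fun n k => coe_rep _
    have hlim : ∀ k, ∃ v, Tendsto (fun n => y n k) U (𝓝 v) := fun k => by
      obtain ⟨v, -, hv⟩ := (isCompact_Icc (a := (0 : ℝ)) (b := 1)).exists_tendsto_ultrafilter U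
        (u := fun n => y n k) (Eventually.of_forall fun n => rep_mem_Icc _)
      exact ⟨v, hv⟩
    choose Y hY using hlim
    have hYc : ∀ k, Tendsto (fun n => ((tauIter F (w n) k (x n) : ℝ) : Circle1)) U
        (𝓝 (Y k : Circle1)) := fun k =>
      ((((AddCircle.continuous_mk' (1 : ℝ)).tendsto (Y k)).comp (hY k)).congr fun n => hyc n k)
    refine ⟨Y, hYc, fun k => hK (hYc k) fun n => ?_, fun k => ?_, ?_⟩
    · cases k with
      | zero => exact hxK n
      | succ k => exact hw n (k + 1) (by omega)
    · exact tendsto_nhds_unique ((hF.continuous_cmap.tendsto _).comp (hYc (k + 1)))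
        ((hYc k).congr fun n => (hF.cmap_tauIter_succ (w n) k (x n)).symm)
    · have hs : ∀ n, deriv (hSum F (w n) (fseq n).1) (x n) = derivSeries F (fseq n).1 (y n) :=
        fun n => by
          rw [deriv_hSum hF (fseq n).2]
          exact derivSeries_congr hF _ fun k => (hyc n k).symm
      simp_rw [hs]
      unfold derivSeries
      refine tendsto_tsum_of_dominated_convergence (bound := fun k => M * (A * q ^ k))
        (((summable_geometric_of_lt_one hq0 hq1).mul_left A).mul_left M) (fun k => ?_) ?_
      · refine Tendsto.mul ?_ (Tendsto.inv₀ ?_ (hcontr k _).1)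
        · exact (show TendstoUniformly _ _ (U : Filter ℕ) from fun s hs => hU (hunif' s hs)
            ).tendsto_comp (f0.2.continuous_deriv le_rfl).continuousAt (hY (k + 1))
        · exact (((hF.contDiff_iterate (k + 1)).continuous_deriv le_rfl).tendsto _).comp
            (hY (k + 1))
      · filter_upwards [hM] with n hn k
        rw [norm_mul]
        exact mul_le_mul (hn _) (hcontr k _).2 (abs_nonneg _) hMnn
  obtain ⟨Y, hYt, hYK, hYT, hYd⟩ := key i hi
  obtain ⟨Z, hZt, hZK, hZT, hZd⟩ := key j hj
  have h00 : (Y 0 : Circle1) = Z 0 := tendsto_nhds_unique (hYt 0) (hZt 0)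
  have hser : derivSeries F f0.1 Y = derivSeries F f0.1 Z :=
    tendsto_nhds_unique hYd (hZd.congr fun n => (hderiv n).symm)
  -- Local injectivity of the circle map keeps the two first preimages apart in the limit.
  have hne : (Y 1 : Circle1) ≠ Z 1 := by
    intro heq
    obtain ⟨V, hV, hinj⟩ := hF.locally_injective (Y 1 : Circle1)
    have h1 := (hYt 1).eventually hV
    have h2 := (hZt 1).eventually (heq ▸ hV)
    obtain ⟨n, hn1, hn2⟩ := (h1.and h2).exists
    have h3 := hinj hn1 hn2 (by rw [hF.cmap_tauIter_succ, hF.cmap_tauIter_succ]; rfl)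
    exact hF.invFun_ne (x n) (hij n) h3
  obtain ⟨a, ha⟩ := hF.exists_coding (Y 0) (fun k => (Y k : Circle1)) rfl hYT
  obtain ⟨b, hb⟩ := hF.exists_coding (Y 0) (fun k => (Z k : Circle1)) h00.symm hZT
  refine ⟨Y 0, hYK 0, a, b, fun n _ => ?_, fun n _ => ?_, fun hab => ?_, ?_⟩
  · rw [ha]
    exact hYK n
  · rw [hb]
    exact hZK n
  · apply hne
    have h1 := ha 1
    have h2 := hb 1
    simp only [tauIter, hab] at h1 h2
    rw [← h1, ← h2]
  · rw [deriv_hSum hF f0.2, deriv_hSum hF f0.2, derivSeries_congr hF f0.1 ha,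
      derivSeries_congr hF f0.1 hb, hser]
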